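/- arXiv:2108.05637 — 2 statements merged into one kernel-verified Lean document; each statement's English description precedes it below -/
import Mathlib

section
/- Let A be a finite cyclic group acting on finite sets X and Y. Suppose that for every natural number d, the number of elements x ∈ X whose stabiliser in A has cardinality d equals the number of elements y ∈ Y whose stabiliser in A has cardinality d. Then there exists an A-equivariant bijection f : X → Y, i.e. a bijection satisfying f(a • x) = a • f(x) for all a ∈ A and x ∈ X. -/
/-! Points with the same stabiliser `H` have isomorphic orbits, both being copies of `G ⧸ H`, and
points with conjugate stabilisers have translates with the same stabiliser. Removing two isomorphic
orbits, one from `X` and one from `Y`, changes the stabiliser counts of `X` and `Y` by the same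
amount, so induction on the number of points matches up all of `X` with all of `Y`. Counting
stabilisers by their order is enough in a finite cyclic group, where the order `d` of a subgroup
forces it to be the kernel of `a ↦ a ^ d`. -/

open MulAction

theorem subgroup_eq_ker_powMonoidHom_card {G : Type*} [CommGroup G] [Finite G] [IsCyclic G]
    (H : Subgroup G) : H = (powMonoidHom (Nat.card H) : G →* G).ker := by
  have le_ker : H ≤ (powMonoidHom (Nat.card H) : G →* G).ker := fun _ ha ↦
    orderOf_dvd_iff_pow_eq_one.1 (H.orderOf_dvd_natCard ha)
  refine Subgroup.eq_of_le_of_card_ge le_ker ?_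
  rw [IsCyclic.card_powMonoidHom_ker]
  exact Nat.gcd_le_right _ Nat.card_pos

theorem subgroup_eq_of_card_eq {G : Type*} [Group G] [Finite G] [IsCyclic G] {H K : Subgroup G}
    (h : Nat.card H = Nat.card K) : H = K := by
  let _ : CommGroup G := IsCyclic.commGroup
  rw [subgroup_eq_ker_powMonoidHom_card H, h, ← subgroup_eq_ker_powMonoidHom_card K]

theorem exists_apply_eq_of_card_fiber_eq {α β ι : Type*} [Finite α] {f : α → ι} {g : β → ι}
    (h : ∀ i, Nat.card {a // f a = i} = Nat.card {b // g b = i}) (a : α) : ∃ b, g b = f a := by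
  have : Nonempty {a' // f a' = f a} := ⟨a, rfl⟩
  have fiber_card_pos : 0 < Nat.card {b // g b = f a} := h (f a) ▸ Nat.card_pos
  obtain ⟨⟨b, hb⟩⟩ := (Nat.card_pos_iff.1 fiber_card_pos).1
  exact ⟨b, hb⟩

/-- Isomorphism of `G`-sets: there is a bijection `X ≃ Y` commuting with the actions of `G`. It is
encoded as a proposition because `G`-sets are only classified up to isomorphism here. -/
def EquivariantlyEquiv (G X Y : Type*) [SMul G X] [SMul G Y] : Prop :=
  ∃ f : X ≃ Y, ∀ (a : G) (x : X), f (a • x) = a • f x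

namespace EquivariantlyEquiv

variable {G X Y Z W : Type*} [SMul G X] [SMul G Y] [SMul G Z] [SMul G W]

theorem symm : EquivariantlyEquiv G X Y → EquivariantlyEquiv G Y X := by
  rintro ⟨f, hf⟩
  exact ⟨f.symm, fun a y ↦ by rw [Equiv.symm_apply_eq, hf, Equiv.apply_symm_apply]⟩

theorem trans : EquivariantlyEquiv G X Y → EquivariantlyEquiv G Y Z → EquivariantlyEquiv G X Z := by
  rintro ⟨f, hf⟩ ⟨g, hg⟩
  exact ⟨f.trans g, fun a x ↦ by simp only [Equiv.trans_apply, hf, hg]⟩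

theorem sum_congr :
    EquivariantlyEquiv G X Z → EquivariantlyEquiv G Y W → EquivariantlyEquiv G (X ⊕ Y) (Z ⊕ W) := by
  rintro ⟨f, hf⟩ ⟨g, hg⟩
  refine ⟨f.sumCongr g, fun a z ↦ ?_⟩
  rcases z with x | y
  · exact congrArg Sum.inl (hf a x)
  · exact congrArg Sum.inr (hg a y)

end EquivariantlyEquiv

section GroupActions

variable {G X Y : Type*} [Group G] [MulAction G X] [MulAction G Y]

theorem EquivariantlyEquiv.sum_compl (S : SubMulAction G X) :
    EquivariantlyEquiv G (S ⊕ (Sᶜ : SubMulAction G X)) X := by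
  classical
  refine ⟨Equiv.Set.sumCompl (S : Set X), fun a z ↦ ?_⟩
  rcases z with x | x <;> rfl

theorem EquivariantlyEquiv.card_stabilizer_eq (p : Subgroup G → Prop) :
    EquivariantlyEquiv G X Y →
      Nat.card {x : X // p (stabilizer G x)} = Nat.card {y : Y // p (stabilizer G y)} := by
  rintro ⟨f, hf⟩
  have stabilizer_apply (x : X) : stabilizer G (f x) = stabilizer G x := by
    ext a
    rw [mem_stabilizer_iff, mem_stabilizer_iff, ← hf, f.apply_eq_iff_eq]
  exact Nat.card_congr (f.subtypeEquiv fun x ↦ by rw [stabilizer_apply])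

theorem card_stabilizer_sum [Finite X] [Finite Y] (p : Subgroup G → Prop) :
    Nat.card {z : X ⊕ Y // p (stabilizer G z)} =
      Nat.card {x : X // p (stabilizer G x)} + Nat.card {y : Y // p (stabilizer G y)} := by
  have stabilizer_inl (x : X) : stabilizer G (Sum.inl x : X ⊕ Y) = stabilizer G x :=
    Subgroup.ext fun _ ↦ Sum.inl_injective.eq_iff
  have stabilizer_inr (y : Y) : stabilizer G (Sum.inr y : X ⊕ Y) = stabilizer G y :=
    Subgroup.ext fun _ ↦ Sum.inr_injective.eq_iff
  rw [Nat.card_congr Equiv.subtypeSum, Nat.card_sum]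
  simp only [stabilizer_inl, stabilizer_inr]

theorem EquivariantlyEquiv.card_stabilizer_compl_eq [Finite X] [Finite Y] {S : SubMulAction G X}
    {T : SubMulAction G Y} (hST : EquivariantlyEquiv G S T) (p : Subgroup G → Prop)
    (h : Nat.card {x : X // p (stabilizer G x)} = Nat.card {y : Y // p (stabilizer G y)}) :
    Nat.card {x : (Sᶜ : SubMulAction G X) // p (stabilizer G x)} =
      Nat.card {y : (Tᶜ : SubMulAction G Y) // p (stabilizer G y)} := by
  rw [← (sum_compl S).card_stabilizer_eq p, ← (sum_compl T).card_stabilizer_eq p,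
    card_stabilizer_sum, card_stabilizer_sum, hST.card_stabilizer_eq p] at h
  exact Nat.add_left_cancel h

/-- The orbit of `x` as a sub-action, so that its complement carries an action as well. -/
def orbitSubMulAction (G : Type*) {X : Type*} [Group G] [MulAction G X] (x : X) :
    SubMulAction G X where
  carrier := orbit G x
  smul_mem' a _ hy := mem_orbit_of_mem_orbit a hy

theorem card_compl_orbitSubMulAction_lt [Finite X] (x : X) :
    Nat.card ((orbitSubMulAction G x)ᶜ : SubMulAction G X) < Nat.card X :=
  Finite.card_subtype_lt (x := x) (not_not_intro (mem_orbit_self x))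

theorem EquivariantlyEquiv.quotient_stabilizer_orbit (x : X) :
    EquivariantlyEquiv G (G ⧸ stabilizer G x) (orbitSubMulAction G x) :=
  ⟨(orbitEquivQuotientStabilizer G x).symm,
    fun a q ↦ Subtype.ext (ofQuotientStabilizer_smul G x a q)⟩

theorem EquivariantlyEquiv.orbit_of_stabilizer_eq {x : X} {y : Y}
    (h : stabilizer G x = stabilizer G y) :
    EquivariantlyEquiv G (orbitSubMulAction G x) (orbitSubMulAction G y) := by
  have hx := quotient_stabilizer_orbit (G := G) x
  rw [h] at hx
  exact hx.symm.trans (quotient_stabilizer_orbit y)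

end GroupActions

open scoped Pointwise in
/-- The function `c` is an invariant separating the conjugacy classes of subgroups, for instance the
order if `A` is finite cyclic or `A = S₃`. -/
theorem exists_equivariant_bijection_of_card_stabilizer_eq_general
    {A X Y ι : Type*} [Group A] [Finite X] [Finite Y] [MulAction A X] [MulAction A Y]
    (c : Subgroup A → ι) (hc : ∀ H K : Subgroup A, c H = c K → ∃ a : A, MulAut.conj a • H = K)
    (h : ∀ i : ι, Nat.card {x : X // c (stabilizer A x) = i}
      = Nat.card {y : Y // c (stabilizer A y) = i}) :
    ∃ f : X ≃ Y, ∀ (a : A) (x : X), f (a • x) = a • f x := by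
  change EquivariantlyEquiv A X Y
  induction hn : Nat.card X using Nat.strong_induction_on generalizing X Y with
  | _ n ih =>
    subst hn
    rcases isEmpty_or_nonempty X with hX | ⟨⟨x⟩⟩
    · have : IsEmpty Y := by
        refine ⟨fun y ↦ ?_⟩
        obtain ⟨x, -⟩ := exists_apply_eq_of_card_fiber_eq (fun i ↦ (h i).symm) y
        exact hX.elim x
      exact ⟨Equiv.equivOfIsEmpty X Y, fun _ x ↦ hX.elim x⟩
    · obtain ⟨y, hxy⟩ : ∃ y : Y, stabilizer A x = stabilizer A y := by
        obtain ⟨y₀, hy₀⟩ := exists_apply_eq_of_card_fiber_eq h x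
        obtain ⟨a, ha⟩ := hc _ _ hy₀
        exact ⟨a • y₀, ((stabilizer_smul_eq_stabilizer_map_conj a y₀).trans ha).symm⟩
      have orbits_equiv := EquivariantlyEquiv.orbit_of_stabilizer_eq hxy
      have compls_equiv := ih _ (card_compl_orbitSubMulAction_lt (G := A) x)
        (fun i ↦ orbits_equiv.card_stabilizer_compl_eq (c · = i) (h i)) rfl
      exact (EquivariantlyEquiv.sum_compl _).symm.trans
        ((orbits_equiv.sum_congr compls_equiv).trans (EquivariantlyEquiv.sum_compl _))

/-- Let a finite cyclic group `A` act on finite sets `X` and `Y`. If for every `d` the number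
of points of `X` whose stabiliser has cardinality `d` equals the number of such points of `Y`,
then there is an `A`-equivariant bijection `X ≃ Y`. -/
theorem exists_equivariant_bijection_of_card_stabilizer_eq
    (A X Y : Type*) [Group A] [Finite A] [IsCyclic A]
    [Finite X] [Finite Y] [MulAction A X] [MulAction A Y]
    (h : ∀ d : ℕ,
      Nat.card {x : X // Nat.card (MulAction.stabilizer A x) = d}
        = Nat.card {y : Y // Nat.card (MulAction.stabilizer A y) = d}) :
    ∃ f : X ≃ Y, ∀ (a : A) (x : X), f (a • x) = a • f x :=
  exists_equivariant_bijection_of_card_stabilizer_eq_general (fun H ↦ Nat.card H)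
    (fun _ _ hHK ↦ ⟨1, by rw [map_one, one_smul, subgroup_eq_of_card_eq hHK]⟩) h
end

section
/- Let G be a finite group, N a normal subgroup of G whose index [G : N] is a power of 2, and let V be a finite-dimensional complex representation of G that is irreducible and whose dimension is odd. Then the restriction of V to N is an irreducible representation of N. -/
/-- A representation `ρ` of a group on a `k`-module `V` is irreducible if `V` is nonzero and
the only `ρ`-invariant submodules of `V` are `⊥` and `⊤`. -/
def IsIrreducibleRep {k G V : Type*} [CommSemiring k] [Monoid G] [AddCommMonoid V]
    [Module k V] (ρ : Representation k G V) : Prop :=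
  (∃ v : V, v ≠ 0) ∧
    ∀ W : Submodule k V, (∀ (g : G), ∀ v ∈ W, ρ g v ∈ W) → W = ⊥ ∨ W = ⊤

/-!
If `H` has index two in `G`, `s ∉ H` and `W` is a proper nonzero `H`-invariant subspace of `V`, then
`G` permutes `W` and its translate `ρ s W`, so their sum and intersection are `G`-invariant.
Irreducibility of `V` forces `V = W ⊕ ρ s W`, whose dimension is even. Since a nontrivial quotient
`G ⧸ N` of 2-power order has a subgroup of index two, the theorem follows by induction on the index
of `N`, passing from `G` to a subgroup of index two that contains `N`.
-/

theorem exists_le_and_index_eq_prime_of_index_eq_prime_pow_succ {G : Type*} [Group G]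
    {N : Subgroup G} [N.Normal] {p n : ℕ} (hp : p.Prime) (hN : N.index = p ^ (n + 1)) :
    ∃ H : Subgroup G, N ≤ H ∧ H.index = p := by
  have : Fact p.Prime := ⟨hp⟩
  have hcard : Nat.card (G ⧸ N) = p ^ (n + 1) := hN
  have : Finite (G ⧸ N) := Nat.finite_of_card_ne_zero (hcard ▸ pow_ne_zero _ hp.ne_zero)
  obtain ⟨K, hK⟩ : ∃ K : Subgroup (G ⧸ N), Nat.card K = p ^ n :=
    Sylow.exists_subgroup_card_pow_prime p (hcard ▸ pow_dvd_pow p n.le_succ)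
  refine ⟨K.comap (QuotientGroup.mk' N), QuotientGroup.le_comap_mk' N K, ?_⟩
  rw [K.index_comap_of_surjective (QuotientGroup.mk'_surjective N)]
  apply Nat.eq_of_mul_eq_mul_left (pow_pos hp.pos n)
  calc p ^ n * K.index = Nat.card (G ⧸ N) := hK ▸ K.card_mul_index
    _ = p ^ n * p := by rw [hcard, pow_succ]

section Translate

variable {k G V : Type*} [CommSemiring k] [Group G] [AddCommMonoid V] [Module k V]
  {ρ : Representation k G V} {H : Subgroup G} {W : Submodule k V}

theorem map_representation_le_of_inv_mul_mem (hW : ∀ h : H, ∀ v ∈ W, ρ h v ∈ W) {a b : G}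
    (hab : a⁻¹ * b ∈ H) : W.map (ρ b) ≤ W.map (ρ a) := by
  rintro _ ⟨v, hv, rfl⟩
  refine ⟨ρ (a⁻¹ * b) v, hW ⟨_, hab⟩ v hv, ?_⟩
  rw [← Module.End.mul_apply, ← map_mul, mul_inv_cancel_left]

theorem map_representation_le_or_swap_of_index_eq_two (hH : H.index = 2)
    (hW : ∀ h : H, ∀ v ∈ W, ρ h v ∈ W) {s : G} (hs : s ∉ H) (g : G) :
    (W.map (ρ g) ≤ W ∧ (W.map (ρ s)).map (ρ g) ≤ W.map (ρ s)) ∨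
      (W.map (ρ g) ≤ W.map (ρ s) ∧ (W.map (ρ s)).map (ρ g) ≤ W) := by
  have map_one : W.map (ρ 1) = W := by rw [map_one, Module.End.one_eq_id, Submodule.map_id]
  have map_map : (W.map (ρ s)).map (ρ g) = W.map (ρ (g * s)) := by
    rw [map_mul, Module.End.mul_eq_comp, Submodule.map_comp]
  have translate_le {a b : G} (hab : a ∈ H ↔ b ∈ H) : W.map (ρ b) ≤ W.map (ρ a) :=
    map_representation_le_of_inv_mul_mem hW <|
      (Subgroup.mul_mem_iff_of_index_two hH).2 (inv_mem_iff.trans hab)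
  have mul_mem_iff : g * s ∈ H ↔ (g ∈ H ↔ s ∈ H) := Subgroup.mul_mem_iff_of_index_two hH
  have one_mem : 1 ∈ H := H.one_mem
  rw [map_map]
  by_cases hg : g ∈ H
  · exact .inl ⟨(translate_le (by tauto)).trans_eq map_one, translate_le (by tauto)⟩
  · exact .inr ⟨translate_le (by tauto), (translate_le (by tauto)).trans_eq map_one⟩

end Translate

namespace IsIrreducibleRep

section Semiring

variable {k G V : Type*} [CommSemiring k] [AddCommMonoid V] [Module k V]

theorem of_comp {M : Type*} [Monoid M] [Monoid G] {ρ : Representation k G V} {f : M →* G}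
    (hirr : IsIrreducibleRep (ρ.comp f)) : IsIrreducibleRep ρ :=
  ⟨hirr.1, fun W hW => hirr.2 W fun m => hW (f m)⟩

theorem isCompl_of_forall_map_le_or_swap [Monoid G] {ρ : Representation k G V}
    (hirr : IsIrreducibleRep ρ) {W W' : Submodule k V} (hbot : W ≠ ⊥) (htop : W ≠ ⊤)
    (hperm : ∀ g, (W.map (ρ g) ≤ W ∧ W'.map (ρ g) ≤ W') ∨
      (W.map (ρ g) ≤ W' ∧ W'.map (ρ g) ≤ W)) :
    IsCompl W W' := by
  have eq_bot_or_eq_top {U : Submodule k V} (hU : ∀ g, U.map (ρ g) ≤ U) : U = ⊥ ∨ U = ⊤ :=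
    hirr.2 U fun g => Submodule.map_le_iff_le_comap.1 (hU g)
  have hinf : W ⊓ W' = ⊥ ∨ W ⊓ W' = ⊤ := by
    refine eq_bot_or_eq_top fun g => (Submodule.map_inf_le _).trans ?_
    obtain ⟨hW, hW'⟩ | ⟨hW, hW'⟩ := hperm g
    · exact inf_le_inf hW hW'
    · exact (inf_le_inf hW hW').trans_eq (inf_comm _ _)
  have hsup : W ⊔ W' = ⊥ ∨ W ⊔ W' = ⊤ := by
    refine eq_bot_or_eq_top fun g => (Submodule.map_sup _ _ _).trans_le ?_
    obtain ⟨hW, hW'⟩ | ⟨hW, hW'⟩ := hperm g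
    · exact sup_le_sup hW hW'
    · exact (sup_le_sup hW hW').trans_eq (sup_comm _ _)
  exact .of_eq (hinf.resolve_right fun h => htop (inf_eq_top_iff.1 h).1)
    (hsup.resolve_left fun h => hbot (sup_eq_bot_iff.1 h).1)

theorem comp_subtype_of_comp_subtype_subgroupOf [Group G] {ρ : Representation k G V}
    {N H : Subgroup G} (hNH : N ≤ H)
    (hirr : IsIrreducibleRep ((ρ.comp H.subtype).comp (N.subgroupOf H).subtype)) :
    IsIrreducibleRep (ρ.comp N.subtype) :=
  of_comp (f := (Subgroup.subgroupOfEquivOfLe hNH).toMonoidHom) hirr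

end Semiring

section Field

variable {k G V : Type*} [Field k] [Group G] [AddCommGroup V] [Module k V]
  {ρ : Representation k G V}

theorem finrank_eq_two_mul_of_index_eq_two [FiniteDimensional k V] (hirr : IsIrreducibleRep ρ)
    {H : Subgroup G} (hH : H.index = 2) {W : Submodule k V}
    (hW : ∀ h : H, ∀ v ∈ W, ρ h v ∈ W) (hbot : W ≠ ⊥) (htop : W ≠ ⊤) :
    Module.finrank k V = 2 * Module.finrank k W := by
  obtain ⟨s, hs⟩ : ∃ s, s ∉ H := by
    by_contra! hmem
    simp [(Subgroup.eq_top_iff' H).2 hmem] at hH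
  have hcompl : IsCompl W (W.map (ρ s)) :=
    hirr.isCompl_of_forall_map_le_or_swap hbot htop
      (map_representation_le_or_swap_of_index_eq_two hH hW hs)
  have htranslate : Module.finrank k (W.map (ρ s)) = Module.finrank k W :=
    (Submodule.equivMapOfInjective (ρ s) (ρ.apply_bijective s).1 W).finrank_eq.symm
  rw [← Submodule.finrank_add_eq_of_isCompl hcompl, htranslate, two_mul]

theorem comp_subtype_of_index_eq_two (hirr : IsIrreducibleRep ρ)
    (hodd : Odd (Module.finrank k V)) {H : Subgroup G} (hH : H.index = 2) :
    IsIrreducibleRep (ρ.comp H.subtype) := by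
  have : FiniteDimensional k V := Module.finite_of_finrank_pos hodd.pos
  refine ⟨hirr.1, fun W hW => ?_⟩
  by_contra! hproper
  have hdim := hirr.finrank_eq_two_mul_of_index_eq_two hH hW hproper.1 hproper.2
  exact Nat.not_odd_iff_even.2 (hdim ▸ even_two_mul _) hodd

end Field

end IsIrreducibleRep

theorem restriction_irreducible_of_odd_dim_general {K G V : Type*} [Field K] [Group G]
    {N : Subgroup G} [N.Normal] {k : ℕ} (hN : N.index = 2 ^ k) [AddCommGroup V] [Module K V]
    {ρ : Representation K G V} (hirr : IsIrreducibleRep ρ) (hodd : Odd (Module.finrank K V)) :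
    IsIrreducibleRep (ρ.comp N.subtype) := by
  induction k generalizing G with
  | zero =>
    obtain rfl : N = ⊤ := Subgroup.index_eq_one.1 hN
    exact .of_comp (f := Subgroup.topEquiv.symm.toMonoidHom) hirr
  | succ k ih =>
    obtain ⟨H, hNH, hH⟩ :=
      exists_le_and_index_eq_prime_of_index_eq_prime_pow_succ Nat.prime_two hN
    have hindex : (N.subgroupOf H).index = 2 ^ k := by
      apply Nat.eq_of_mul_eq_mul_right two_pos
      calc (N.subgroupOf H).index * 2 = N.index := hH ▸ Subgroup.relIndex_mul_index hNH
        _ = 2 ^ k * 2 := by rw [hN, pow_succ]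
    exact .comp_subtype_of_comp_subtype_subgroupOf hNH
      (ih hindex (hirr.comp_subtype_of_index_eq_two hodd hH))

/-- Let `G` be a finite group, `N` a normal subgroup of index a power of 2, and `V` a
finite-dimensional complex representation of `G` that is irreducible of odd dimension.
Then the restriction of `V` to `N` is irreducible. -/
theorem restriction_irreducible_of_odd_dim (G : Type*) [Group G] [Finite G]
    (N : Subgroup G) [N.Normal] (hN : ∃ k : ℕ, N.index = 2 ^ k)
    (V : Type*) [AddCommGroup V] [Module ℂ V] [FiniteDimensional ℂ V]
    (ρ : Representation ℂ G V)
    (hirr : IsIrreducibleRep ρ) (hodd : Odd (Module.finrank ℂ V)) :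
    IsIrreducibleRep (ρ.comp N.subtype) := by
  obtain ⟨k, hk⟩ := hN
  exact restriction_irreducible_of_odd_dim_general hk hirr hodd
end
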